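/- In the group G_1 = ⟨a'_0, a''_0, a_1 | (a'_0)² = e, (a''_0)² = e, (a_1)² = e, a'_0·a_1 = a_1·a''_0⟩, the element a'_0·a_1 has infinite order. -/

import Mathlib

open FreeGroup

/-- Generators of the groups `G_m` and `G̃_m`: `.inl (i, false)` is `a'_i`,
`.inl (i, true)` is `a''_i`, and `.inr ()` is `a_m`. -/
abbrev Gen (m : ℕ) := (Fin m × Bool) ⊕ Unit

/-- The defining relators of the group `G_m`. -/
def Gm.rels (m : ℕ) : Set (FreeGroup (Gen m)) :=
  {w | (∃ i : Fin m, ∃ t : Bool, w = of (.inl (i, t)) * of (.inl (i, t)))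
    ∨ w = of (.inr ()) * of (.inr ())
    ∨ (∃ i j : Fin m, i < j ∧
        (w = of (.inl (i, false)) * of (.inl (j, false)) *
             (of (.inl (j, false)) * of (.inl (i, true)))⁻¹
       ∨ w = of (.inl (i, false)) * of (.inl (j, true)) *
             (of (.inl (j, true)) * of (.inl (i, true)))⁻¹))
    ∨ (∃ i : Fin m, w = of (.inl (i, false)) * of (.inr ()) *
             (of (.inr ()) * of (.inl (i, true)))⁻¹)}

/-- The group `G_m`. -/
abbrev Gm (m : ℕ) := PresentedGroup (Gm.rels m)

def Gm.a' {m : ℕ} (i : Fin m) : Gm m := PresentedGroup.of (.inl (i, false))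
def Gm.a'' {m : ℕ} (i : Fin m) : Gm m := PresentedGroup.of (.inl (i, true))
def Gm.am (m : ℕ) : Gm m := PresentedGroup.of (.inr ())

namespace Gm

/-- The images in the infinite dihedral group of the generators of `G_1`. -/
def dihedralGen : Gen 1 → DihedralGroup 0
  | .inl (_, false) => .sr 0
  | .inl (_, true) => .sr 2
  | .inr () => .sr 1

theorem lift_dihedralGen_eq_one (w : FreeGroup (Gen 1)) (hw : w ∈ rels 1) :
    FreeGroup.lift dihedralGen w = 1 := by
  rcases hw with ⟨i, t, rfl⟩ | rfl | ⟨i, j, hij, -⟩ | ⟨i, rfl⟩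
  · cases t <;> simp [dihedralGen]
  · simp [dihedralGen]
  · exact absurd hij (by simp [Subsingleton.elim i j])
  · rw [_root_.map_mul, _root_.map_inv, mul_inv_eq_one]
    simp only [_root_.map_mul, lift_apply_of, dihedralGen,
      DihedralGroup.sr_mul_sr]
    rfl

/-- The homomorphism from `G_1` to the infinite dihedral group. -/
def toDihedral : Gm 1 →* DihedralGroup 0 :=
  PresentedGroup.toGroup lift_dihedralGen_eq_one

theorem toDihedral_a'_mul_am : toDihedral (a' 0 * am 1) = .r 1 := by
  simp [toDihedral, a', am, dihedralGen]

end Gm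

/-- In `G_1`, the element `a'_0 · a_1` has infinite order. -/
theorem stmt_0 : ¬ IsOfFinOrder (Gm.a' (0 : Fin 1) * Gm.am 1) := by
  intro h
  have hr := Gm.toDihedral.isOfFinOrder h
  rw [Gm.toDihedral_a'_mul_am, ← orderOf_pos_iff, DihedralGroup.orderOf_r_one] at hr
  exact lt_irrefl 0 hr
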